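/- Under the standing assumptions of Section 4 of the paper, for any modules (V, v) and (W, w) over the semigroup A, with s := (1⊗ε⊗1)∘(1⊗μ⊗1)∘(τ̄_V⊗τ_W) : V⊗W → V⊗W, the following hold as morphisms A⊗A⊗V⊗W → V⊗W: (i) s∘(v⊗w)∘(1⊗c⊗1) = (v⊗w)∘(1⊗c⊗1)∘(e₁⊗1⊗1); and (ii) (v⊗w)∘(1⊗c⊗1)∘(1⊗1⊗s) = (v⊗w)∘(1⊗c⊗1)∘(e₂⊗1⊗1), where the middle braiding c : A⊗V → V⊗A interchanges the second A factor with V. -/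

import Mathlib

open CategoryTheory Category MonoidalCategory Limits

universe v u

namespace WeakMultiplierBimonoid

variable {C : Type u} [Category.{v} C] [MonoidalCategory C] [BraidedCategory C]

def wl {A : C} (f : A ⊗ A ⟶ A ⊗ A) : A ⊗ (A ⊗ A) ⟶ A ⊗ (A ⊗ A) :=
  (α_ A A A).inv ≫ (f ▷ A) ≫ (α_ A A A).hom

def ml {A : C} (f : A ⊗ A ⟶ A) : A ⊗ (A ⊗ A) ⟶ A ⊗ A :=
  (α_ A A A).inv ≫ (f ▷ A)

def NdLeftOn {Z V W : C} (v : Z ⊗ V ⟶ W) (𝒴 : Set C) : Prop :=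
  ∀ (X : C), ∀ Y ∈ 𝒴, Function.Injective
    (fun g : X ⟶ V ⊗ Y => (Z ◁ g) ≫ (α_ Z V Y).inv ≫ (v ▷ Y))

def NdRightOn {Z V W : C} (v : Z ⊗ V ⟶ W) (𝒴 : Set C) : Prop :=
  NdLeftOn ((β_ V Z).hom ≫ v) 𝒴

/-- The "middle braiding" `1 ⊗ c ⊗ 1 : A⁴ ⟶ A⁴` on `(A ⊗ A) ⊗ (A ⊗ A)`. -/
def midSw (A : C) : (A ⊗ A) ⊗ (A ⊗ A) ⟶ (A ⊗ A) ⊗ (A ⊗ A) :=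
  (α_ A A (A ⊗ A)).hom ≫ (A ◁ (α_ A A A).inv) ≫ (A ◁ ((β_ A A).hom ▷ A)) ≫
    (A ◁ (α_ A A A).hom) ≫ (α_ A A (A ⊗ A)).inv

/-- A regular weak multiplier bimonoid on an object `A` of a braided monoidal category,
with multiplication non-degenerate with respect to the class `𝒴`
(Definition 2.9 of the paper). -/
structure RWMB (A : C) (𝒴 : Set C) where
  t₁ : A ⊗ A ⟶ A ⊗ A
  t₂ : A ⊗ A ⟶ A ⊗ A
  t₃ : A ⊗ A ⟶ A ⊗ A
  t₄ : A ⊗ A ⟶ A ⊗ A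
  e₁ : A ⊗ A ⟶ A ⊗ A
  e₂ : A ⊗ A ⟶ A ⊗ A
  j : A ⟶ 𝟙_ C
  /-- the induced multiplication -/
  m : A ⊗ A ⟶ A
  /-- counit condition (m1); in particular `m` is the induced multiplication -/
  hm₁ : m = t₁ ≫ (j ▷ A) ≫ (λ_ A).hom
  /-- counit condition (m2) -/
  hm₂ : m = t₂ ≫ (A ◁ j) ≫ (ρ_ A).hom
  /-- counit condition (m3) -/
  hm₃ : m = (β_ A A).hom ≫ t₃ ≫ (j ▷ A) ≫ (λ_ A).hom
  /-- counit condition (m4) -/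
  hm₄ : m = (β_ A A).hom ≫ t₄ ≫ (A ◁ j) ≫ (ρ_ A).hom
  /-- the class `𝒴` contains the monoidal unit -/
  memI : (𝟙_ C) ∈ 𝒴
  memA : A ∈ 𝒴
  memAA : (A ⊗ A) ∈ 𝒴
  /-- `m` is non-degenerate on the left with respect to `𝒴` -/
  ndl : NdLeftOn m 𝒴
  /-- `m` is non-degenerate on the right with respect to `𝒴` -/
  ndr : NdRightOn m 𝒴
  /-- relation (c12) -/
  hc12 : (A ◁ t₁) ≫ ml m = wl t₂ ≫ (A ◁ m)
  /-- relation (c13) -/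
  hc13 : wl t₁ ≫ (A ◁ (β_ A A).hom) ≫ (A ◁ m)
    = (A ◁ (β_ A A).hom) ≫ wl t₃ ≫ (A ◁ m)
  /-- relation (c14) -/
  hc14 : (A ◁ t₁) ≫ wl (β_ A A).hom ≫ ml m = wl t₄ ≫ (A ◁ m)
  /-- relation (c23) -/
  hc23 : wl t₂ ≫ (A ◁ (β_ A A).hom) ≫ (A ◁ m) = (A ◁ t₃) ≫ ml m
  /-- relation (c24) -/
  hc24 : (A ◁ t₂) ≫ wl (β_ A A).hom ≫ ml m = wl (β_ A A).hom ≫ (A ◁ t₄) ≫ ml m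
  /-- relation (c34) -/
  hc34 : (A ◁ t₃) ≫ wl (β_ A A).hom ≫ ml m = wl t₄ ≫ (A ◁ (β_ A A).hom) ≫ (A ◁ m)
  /-- interchange relation for `(t₂, t₁)` -/
  hi21 : (A ◁ t₁) ≫ wl t₂ = wl t₂ ≫ (A ◁ t₁)
  /-- interchange relation for `(t₄, t₁)` -/
  hi41 : (A ◁ t₁) ≫ wl t₄ = wl t₄ ≫ (A ◁ t₁)
  /-- interchange relation for `(t₂, t₃)` -/
  hi23 : (A ◁ t₃) ≫ wl t₂ = wl t₂ ≫ (A ◁ t₃)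
  /-- interchange relation for `(t₄, t₃)` -/
  hi43 : (A ◁ t₃) ≫ wl t₄ = wl t₄ ≫ (A ◁ t₃)
  /-- compatibility of the idempotents `e₁`, `e₂`:
  `(m ⊗ m) ∘ (1 ⊗ c ⊗ 1) ∘ (1 ⊗ 1 ⊗ e₁) = (m ⊗ m) ∘ (1 ⊗ c ⊗ 1) ∘ (e₂ ⊗ 1 ⊗ 1)` -/
  hecomp : ((A ⊗ A) ◁ e₁) ≫ midSw A ≫ (m ▷ (A ⊗ A)) ≫ (A ◁ m)
    = (e₂ ▷ (A ⊗ A)) ≫ midSw A ≫ (m ▷ (A ⊗ A)) ≫ (A ◁ m)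
  /-- Axiom I for the weakly counital fusion morphism `(t₁, e₁, j)` -/
  ax1 : (A ◁ t₁) ≫ wl (β_ A A).hom ≫ (A ◁ t₁) ≫ wl (β_ A A).inv ≫ wl t₁
    = wl t₁ ≫ (A ◁ t₁)
  /-- Axiom II -/
  ax2 : e₁ ≫ e₁ = e₁
  /-- Axiom III -/
  ax3 : t₁ ≫ e₁ = t₁
  /-- Axiom IV -/
  ax4 : (A ◁ e₁) ≫ (A ◁ (β_ A A).inv) ≫ wl t₁ ≫ (A ◁ (β_ A A).hom) ≫ ml m
    = (A ◁ (β_ A A).inv) ≫ wl t₁ ≫ (A ◁ (β_ A A).hom) ≫ ml m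
  /-- Axiom V -/
  ax5 : (A ◁ t₁) ≫ wl e₁ = wl e₁ ≫ (A ◁ t₁)
  /-- Axiom VI -/
  ax6 : wl t₁ ≫ (A ◁ e₁)
    = (A ◁ (β_ A A).inv) ≫ wl e₁ ≫ (A ◁ (β_ A A).hom) ≫ wl t₁
  /-- Axiom VII -/
  ax7 : wl t₁ ≫ (A ◁ ((j ▷ A) ≫ (λ_ A).hom)) ≫ m
    = (A ◁ (β_ A A).hom) ≫ (A ◁ e₁) ≫ (A ◁ ((A ◁ j) ≫ (ρ_ A).hom)) ≫ m
  /-- Axiom VIII -/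
  ax8 : wl t₁ ≫ (A ◁ (β_ A A).hom) ≫ ml m ≫ (j ▷ A) ≫ (λ_ A).hom
    = (A ◁ (β_ A A).hom) ≫ (A ◁ e₁) ≫ (A ◁ ((j ▷ A) ≫ (λ_ A).hom)) ≫ m

namespace RWMB

variable {A : C} {𝒴 : Set C} (S : RWMB A 𝒴)

/-- `⊓ᴸ₁ := (j ⊗ 1) ∘ e₁`. -/
def piL1 : A ⊗ A ⟶ A := S.e₁ ≫ (S.j ▷ A) ≫ (λ_ A).hom

/-- `⊓ᴸ₂ := (j ⊗ 1) ∘ t₄ ∘ c`. -/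
def piL2 : A ⊗ A ⟶ A := (β_ A A).hom ≫ S.t₄ ≫ (S.j ▷ A) ≫ (λ_ A).hom

/-- `⊓̄ᴿ₁ ∘ c⁻¹ = (1 ⊗ j) ∘ e₁`, the second leg of the coequalizer defining the base
object. -/
def piBarR1c : A ⊗ A ⟶ A := S.e₁ ≫ (A ◁ S.j) ≫ (ρ_ A).hom

end RWMB


/-- A module over the semigroup `(A, m)`, relative to the class `𝒴`: an object of `𝒴`
with an associative action which is a regular epimorphism and non-degenerate on the
left with respect to `𝒴`. -/
structure AModule (A : C) (m : A ⊗ A ⟶ A) (𝒴 : Set C) where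
  V : C
  mem : V ∈ 𝒴
  act : A ⊗ V ⟶ V
  assoc : (A ◁ act) ≫ act = (α_ A A V).inv ≫ (m ▷ V) ≫ act
  regEpi : Nonempty (RegularEpi act)
  nd : NdLeftOn act 𝒴

/-- The canonical idempotent
`s := (1 ⊗ ε ⊗ 1) ∘ (1 ⊗ μ ⊗ 1) ∘ (τ̄_V ⊗ τ_W) : V ⊗ W ⟶ V ⊗ W`. -/
def sIdem {L : C} (μ : L ⊗ L ⟶ L) (ε : L ⟶ 𝟙_ C) {V W : C}
    (τbV : V ⟶ V ⊗ L) (τW : W ⟶ L ⊗ W) : V ⊗ W ⟶ V ⊗ W :=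
  (τbV ▷ W) ≫ ((V ⊗ L) ◁ τW) ≫ (α_ V L (L ⊗ W)).hom ≫ (V ◁ (α_ L L W).inv) ≫
    (V ◁ (μ ▷ W)) ≫ (V ◁ (ε ▷ W)) ≫ (V ◁ (λ_ W).hom)

/-- `(v ⊗ w) ∘ (1 ⊗ c ⊗ 1) : (A ⊗ A) ⊗ (V ⊗ W) ⟶ V ⊗ W`, where the middle braiding
`c : A ⊗ V ⟶ V ⊗ A` interchanges the second `A` factor with `V`. -/
def actPair {A V W : C} (v : A ⊗ V ⟶ V) (w : A ⊗ W ⟶ W) :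
    (A ⊗ A) ⊗ (V ⊗ W) ⟶ V ⊗ W :=
  (α_ A A (V ⊗ W)).hom ≫ (A ◁ (α_ A V W).inv) ≫ (A ◁ ((β_ A V).hom ▷ W)) ≫
    (A ◁ (α_ V A W).hom) ≫ (α_ A V (A ⊗ W)).inv ≫ (v ▷ (A ⊗ W)) ≫ (V ◁ w)

theorem regepi_wl (presL : ∀ X : C, PreservesColimitsOfShape WalkingParallelPair (tensorLeft X))
    (X : C) {Y Z : C} (f : Y ⟶ Z) (h : Nonempty (RegularEpi f)) : Nonempty (RegularEpi (X ◁ f)) := by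
  obtain ⟨h⟩ := h
  have := presL X
  exact ⟨⟨_, _, _, _, isColimitCoforkMapOfIsColimit (tensorLeft X) h.w h.isColimit⟩⟩

theorem regepi_wr (presR : ∀ X : C, PreservesColimitsOfShape WalkingParallelPair (tensorRight X))
    (X : C) {Y Z : C} (f : Y ⟶ Z) (h : Nonempty (RegularEpi f)) : Nonempty (RegularEpi (f ▷ X)) := by
  obtain ⟨h⟩ := h
  have := presR X
  exact ⟨⟨_, _, _, _, isColimitCoforkMapOfIsColimit (tensorRight X) h.w h.isColimit⟩⟩

theorem epi_of_regepi {Y Z : C} (f : Y ⟶ Z) (h : Nonempty (RegularEpi f)) : Epi f := by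
  obtain ⟨h⟩ := h
  exact epi_of_isColimit_cofork h.isColimit

theorem regepi_of_univ {Y Z L : C} (f g : Y ⟶ Z) (p : Z ⟶ L) (hpc : f ≫ p = g ≫ p)
    (hpu : ∀ {X : C} (h : Z ⟶ X), f ≫ h = g ≫ h → ∃! k : L ⟶ X, p ≫ k = h) :
    Nonempty (RegularEpi p) :=
  ⟨⟨_, f, g, hpc, Cofork.IsColimit.mk _
    (fun s => (hpu s.π s.condition).choose)
    (fun s => (hpu s.π s.condition).choose_spec.1)
    (fun s k hk => (hpu s.π s.condition).choose_spec.2 k hk)⟩⟩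

theorem braid_left {L A B : C} (n : L ⊗ A ⟶ B) (V : C) : n ▷ V ≫ (β_ B V).hom =
    (α_ L A V).hom ≫ L ◁ (β_ A V).hom ≫ (α_ L V A).inv ≫ (β_ L V).hom ▷ A ≫ (α_ V L A).hom ≫ V ◁ n := by
  rw [BraidedCategory.braiding_naturality_left, BraidedCategory.braiding_tensor_left_hom]
  simp

theorem slide {A : C} (f : A ⊗ A ⟶ A ⊗ A) : (A ◁ (β_ A A).inv) ≫ wl f ≫ (A ◁ (β_ A A).hom)
      = wl (β_ A A).hom ≫ (A ◁ f) ≫ wl (β_ A A).inv := by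
    have hb := BraidedCategory.braiding_naturality_left f A
    rw [BraidedCategory.braiding_tensor_left_hom] at hb
    have hb2 := congrArg (fun f => (A ◁ (β_ A A).inv) ≫ (α_ A A A).inv ≫ f ≫ wl (β_ A A).inv) hb
    simp only [wl] at hb2 ⊢
    simpa using hb2

namespace RWMB
variable {A : C} {𝒴 : Set C} (S : RWMB A 𝒴)

/-- associativity of the multiplication -/
theorem m_assoc : (A ◁ S.m) ≫ S.m = (α_ A A A).inv ≫ (S.m ▷ A) ≫ S.m := by
  have h := congrArg (fun f => f ≫ (S.j ▷ (A ⊗ A)) ≫ (λ_ (A ⊗ A)).hom ≫ (S.j ▷ A) ≫ (λ_ A).hom) S.ax1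
  have hR : (wl S.t₁ ≫ (A ◁ S.t₁)) ≫ (S.j ▷ (A ⊗ A)) ≫ (λ_ (A ⊗ A)).hom ≫ (S.j ▷ A) ≫ (λ_ A).hom
      = (α_ A A A).inv ≫ (S.m ▷ A) ≫ S.m := by
    rw [assoc, whisker_exchange_assoc]
    conv_rhs => rw [S.hm₁]
    simp only [wl]
    monoidal
  rw [hR] at h
  rw [← h]
  have h8 := congrArg (fun f => (A ◁ S.t₁) ≫ (A ◁ (β_ A A).inv) ≫ f) S.ax8
  have h8R : (A ◁ S.t₁) ≫ (A ◁ (β_ A A).inv) ≫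
      (A ◁ (β_ A A).hom) ≫ (A ◁ S.e₁) ≫ (A ◁ ((S.j ▷ A) ≫ (λ_ A).hom)) ≫ S.m
      = (A ◁ S.m) ≫ S.m := by
    have hm : S.t₁ ≫ S.e₁ ≫ (S.j ▷ A) ≫ (λ_ A).hom = S.m := by
      rw [← assoc, S.ax3, ← S.hm₁]
    calc _ = A ◁ (S.t₁ ≫ S.e₁ ≫ (S.j ▷ A) ≫ (λ_ A).hom) ≫ S.m := by simp
      _ = _ := by rw [hm]
  rw [h8R] at h8
  rw [← h8]
  have hn := slide S.t₁
  calc _ = (A ◁ S.t₁) ≫ ((A ◁ (β_ A A).inv) ≫ wl S.t₁ ≫ (A ◁ (β_ A A).hom)) ≫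
        ml S.m ≫ (S.j ▷ A) ≫ (λ_ A).hom := by simp only [assoc]
    _ = _ := by
      rw [hn]
      simp only [ml, assoc]
      rw [S.hm₁]
      simp only [wl]
      monoidal

theorem m_braid : (A ◁ S.m) ≫ (β_ A A).hom ≫ S.m
      = wl (β_ A A).hom ≫ (A ◁ (β_ A A).hom) ≫ (A ◁ S.m) ≫ S.m := by
    rw [BraidedCategory.braiding_naturality_right_assoc, BraidedCategory.braiding_tensor_right_hom,
      S.m_assoc]
    simp [wl]

/-- `m` is invariant under the double braiding (a consequence of `hc24` and `hm₄`). -/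
theorem m_double : (β_ A A).hom ≫ S.m = (β_ A A).inv ≫ S.m := by
  have h := congrArg (fun f => f ≫ (A ◁ S.j) ≫ (ρ_ A).hom) S.hc24
  have hL : ((A ◁ S.t₂) ≫ wl (β_ A A).hom ≫ ml S.m) ≫ (A ◁ S.j) ≫ (ρ_ A).hom
      = (A ◁ S.m) ≫ (β_ A A).hom ≫ S.m := by
    calc _ = (A ◁ S.t₂) ≫ (α_ A A A).inv ≫ (((β_ A A).hom ≫ S.m) ▷ A ≫ (A ◁ S.j)) ≫ (ρ_ A).hom := by
          simp only [wl, ml]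
          monoidal
      _ = A ◁ (S.t₂ ≫ (A ◁ S.j) ≫ (ρ_ A).hom) ≫ (β_ A A).hom ≫ S.m := by
          rw [← whisker_exchange]
          monoidal
      _ = _ := by rw [← S.hm₂]
  have h4 : S.t₄ ≫ (A ◁ S.j) ≫ (ρ_ A).hom = (β_ A A).inv ≫ S.m := by
    conv_rhs => rw [S.hm₄]
    simp
  have hR : (wl (β_ A A).hom ≫ (A ◁ S.t₄) ≫ ml S.m) ≫ (A ◁ S.j) ≫ (ρ_ A).hom
      = wl (β_ A A).hom ≫ (A ◁ (β_ A A).inv) ≫ (A ◁ S.m) ≫ S.m := by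
    calc _ = wl (β_ A A).hom ≫ (A ◁ S.t₄) ≫ (α_ A A A).inv ≫ (S.m ▷ A ≫ (A ◁ S.j)) ≫ (ρ_ A).hom := by
          simp only [wl, ml]
          monoidal
      _ = wl (β_ A A).hom ≫ A ◁ (S.t₄ ≫ (A ◁ S.j) ≫ (ρ_ A).hom) ≫ S.m := by
          rw [← whisker_exchange]
          monoidal
      _ = _ := by rw [h4]; simp
  have h2 := S.m_braid
  have h3 : wl (β_ A A).hom ≫ (A ◁ (β_ A A).hom) ≫ (A ◁ S.m) ≫ S.m =
      wl (β_ A A).hom ≫ (A ◁ (β_ A A).inv) ≫ (A ◁ S.m) ≫ S.m := by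
    rw [← h2, ← hL, ← hR]
    exact h
  have : IsIso (wl (β_ A A).hom) := by
    unfold wl
    infer_instance
  rw [cancel_epi] at h3
  have h5 := S.ndl (A ⊗ A) (𝟙_ C) S.memI (a₁ := ((β_ A A).hom ≫ S.m) ≫ (ρ_ A).inv)
    (a₂ := ((β_ A A).inv ≫ S.m) ≫ (ρ_ A).inv) (by
      dsimp only
      calc _ = ((A ◁ (β_ A A).hom) ≫ (A ◁ S.m) ≫ S.m) ≫ (ρ_ A).inv := by monoidal
        _ = _ := by
          rw [h3]
          monoidal)
  exact (cancel_mono _).1 h5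

/-- `e₁` is a right module map in its first factor. -/
theorem e₁_m_left : (S.m ▷ A) ≫ S.e₁ = (α_ A A A).hom ≫ (A ◁ (β_ A A).inv) ≫ wl S.e₁ ≫
      (A ◁ (β_ A A).hom) ≫ (α_ A A A).inv ≫ (S.m ▷ A) := by
  have h := congrArg (fun f => (α_ A A A).hom ≫ f ≫ (S.j ▷ (A ⊗ A)) ≫ (λ_ (A ⊗ A)).hom) S.ax6
  simp only [assoc] at h
  rw [whisker_exchange_assoc] at h
  calc _ = _ := ?_
    _ = _ := h
    _ = _ := ?_
  · rw [S.hm₁]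
    simp only [wl]
    monoidal
  · rw [S.hm₁]
    simp only [wl]
    monoidal

theorem ndR (Y : C) (hY : Y ∈ 𝒴) (X : C) (g g' : X ⟶ Y ⊗ A)
    (h : (g ▷ A) ≫ (α_ Y A A).hom ≫ (Y ◁ S.m) = (g' ▷ A) ≫ (α_ Y A A).hom ≫ (Y ◁ S.m)) :
    g = g' := by
  have key : ∀ g : X ⟶ Y ⊗ A, 
      (A ◁ (g ≫ (β_ A Y).inv)) ≫ (α_ A A Y).inv ≫ (((β_ A A).hom ≫ S.m) ▷ Y)
      = (β_ A X).hom ≫ ((g ▷ A) ≫ (α_ Y A A).hom ≫ (Y ◁ S.m)) ≫ (β_ A Y).inv := by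
    intro g
    have h1 : (α_ A A Y).inv ≫ (β_ A A).hom ▷ Y =
        (β_ A (A ⊗ Y)).hom ≫ (α_ A Y A).hom ≫ A ◁ (β_ A Y).inv ≫ (α_ A A Y).inv := by
      rw [BraidedCategory.braiding_tensor_right_hom]
      simp
    have h2 := BraidedCategory.braiding_naturality_right A (g ≫ (β_ A Y).inv)
    rw [comp_whiskerRight, reassoc_of% h1, reassoc_of% h2]
    simp only [assoc]
    rw [BraidedCategory.braiding_inv_naturality_right, BraidedCategory.braiding_tensor_left_inv]
    simp
  have := S.ndr X Y hY (a₁ := g ≫ (β_ A Y).inv) (a₂ := g' ≫ (β_ A Y).inv) (by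
    dsimp only
    rw [key, key, h])
  exact (cancel_mono _).1 this

/-- `e₁` commutes with `t₂`. -/
theorem e₁_t₂_aux :
    𝟙 ((A ⊗ (A ⊗ A)) ⊗ A) ⊗≫ (A ◁ S.e₁) ▷ A ⊗≫ S.t₂ ▷ (A ⊗ A) ⊗≫ (A ⊗ A) ◁ (β_ A A).hom ⊗≫ A ◁ (S.m ▷ A) ⊗≫ 𝟙 (A ⊗ (A ⊗ A))
    = 𝟙 ((A ⊗ (A ⊗ A)) ⊗ A) ⊗≫ S.t₂ ▷ (A ⊗ A) ⊗≫ A ◁ S.e₁ ▷ A ⊗≫ (A ⊗ A) ◁ (β_ A A).hom ⊗≫ A ◁ (S.m ▷ A) ⊗≫ 𝟙 (A ⊗ (A ⊗ A)) := by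
  have h6 : wl S.e₁ ≫ (A ◁ (β_ A A).hom) ≫ wl S.t₁ =
      (A ◁ (β_ A A).hom) ≫ wl S.t₁ ≫ (A ◁ S.e₁) := by
    rw [S.ax6]
    simp
  have h12 := S.hc12
  simp only [wl, ml] at h6 h12
  calc _ = 𝟙 ((A ⊗ (A ⊗ A)) ⊗ A) ⊗≫ (A ◁ S.e₁) ▷ A ⊗≫ (S.t₂ ▷ (A ⊗ A) ≫ (A ⊗ A) ◁ (β_ A A).hom) ⊗≫ A ◁ (S.m ▷ A) ⊗≫ 𝟙 (A ⊗ (A ⊗ A)) := by monoidal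
    _ = 𝟙 ((A ⊗ (A ⊗ A)) ⊗ A) ⊗≫ (A ◁ S.e₁) ▷ A ⊗≫ (A ⊗ A) ◁ (β_ A A).hom ⊗≫
        (((α_ A A A).inv ≫ S.t₂ ▷ A ≫ (α_ A A A).hom) ≫ A ◁ S.m) ▷ A ⊗≫ 𝟙 (A ⊗ (A ⊗ A)) := by
      rw [← whisker_exchange]; monoidal
    _ = 𝟙 ((A ⊗ (A ⊗ A)) ⊗ A) ⊗≫ A ◁ (((α_ A A A).inv ≫ S.e₁ ▷ A ≫ (α_ A A A).hom) ≫ (A ◁ (β_ A A).hom) ≫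
        (α_ A A A).inv ≫ S.t₁ ▷ A ≫ (α_ A A A).hom) ⊗≫ S.m ▷ (A ⊗ A) ⊗≫ 𝟙 (A ⊗ (A ⊗ A)) := by
      rw [← h12]; monoidal
    _ = 𝟙 ((A ⊗ (A ⊗ A)) ⊗ A) ⊗≫ A ◁ A ◁ (β_ A A).hom ⊗≫ A ◁ S.t₁ ▷ A ⊗≫ ((A ⊗ A) ◁ S.e₁ ≫ S.m ▷ (A ⊗ A)) ⊗≫ 𝟙 (A ⊗ (A ⊗ A)) := by
      rw [h6]; monoidal
    _ = 𝟙 ((A ⊗ (A ⊗ A)) ⊗ A) ⊗≫ A ◁ A ◁ (β_ A A).hom ⊗≫ (A ◁ S.t₁ ≫ (α_ A A A).inv ≫ S.m ▷ A) ▷ A ⊗≫ A ◁ S.e₁ ⊗≫ 𝟙 (A ⊗ (A ⊗ A)) := by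
      rw [whisker_exchange]; monoidal
    _ = 𝟙 ((A ⊗ (A ⊗ A)) ⊗ A) ⊗≫ A ◁ A ◁ (β_ A A).hom ⊗≫ S.t₂ ▷ (A ⊗ A) ⊗≫ A ◁ (S.m ▷ A ≫ S.e₁) ⊗≫ 𝟙 (A ⊗ (A ⊗ A)) := by
      rw [h12]; monoidal
    _ = 𝟙 ((A ⊗ (A ⊗ A)) ⊗ A) ⊗≫ ((A ⊗ A) ◁ (β_ A A).hom ≫ S.t₂ ▷ (A ⊗ A)) ⊗≫
          A ◁ (A ◁ (β_ A A).inv ⊗≫ S.e₁ ▷ A ⊗≫ A ◁ (β_ A A).hom ⊗≫ S.m ▷ A) ⊗≫ 𝟙 (A ⊗ (A ⊗ A)) := by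
      rw [S.e₁_m_left]; simp only [wl]; monoidal
    _ = 𝟙 ((A ⊗ (A ⊗ A)) ⊗ A) ⊗≫ S.t₂ ▷ (A ⊗ A) ⊗≫ A ◁ A ◁ ((β_ A A).hom ≫ (β_ A A).inv) ⊗≫
          A ◁ (S.e₁ ▷ A ⊗≫ A ◁ (β_ A A).hom ⊗≫ S.m ▷ A) ⊗≫ 𝟙 (A ⊗ (A ⊗ A)) := by
      rw [whisker_exchange]; monoidal
    _ = _ := by
      rw [Iso.hom_inv_id]; monoidal

theorem e₁_t₂ : (A ◁ S.e₁) ≫ wl S.t₂ = wl S.t₂ ≫ (A ◁ S.e₁) := by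
  have hQ : (α_ A A A).inv ≫ (β_ A A).inv ▷ A ≫ (α_ A A A).hom ≫ A ◁ S.m =
      A ◁ (β_ A A).hom ≫ (α_ A A A).inv ≫ S.m ▷ A ≫ (β_ A A).inv := by
    rw [BraidedCategory.braiding_inv_naturality_left, BraidedCategory.braiding_tensor_right_inv]
    simp
  have key : ∀ G : A ⊗ (A ⊗ A) ⟶ A ⊗ (A ⊗ A),
      ((G ≫ A ◁ (β_ A A).inv ≫ (α_ A A A).inv) ▷ A) ≫ (α_ (A ⊗ A) A A).hom ≫ ((A ⊗ A) ◁ S.m)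
      = (G ▷ A ⊗≫ (A ⊗ A) ◁ (β_ A A).hom ⊗≫ A ◁ (S.m ▷ A) ⊗≫ 𝟙 (A ⊗ (A ⊗ A))) ≫
        A ◁ (β_ A A).inv ≫ (α_ A A A).inv := by
    intro G
    calc _ = G ▷ A ⊗≫ A ◁ ((α_ A A A).inv ≫ (β_ A A).inv ▷ A ≫ (α_ A A A).hom ≫ A ◁ S.m) ⊗≫ 𝟙 _ := by
          monoidal
      _ = _ := by
        rw [hQ]; monoidal
  have h := S.ndR (A ⊗ A) S.memAA _ (((A ◁ S.e₁) ≫ wl S.t₂) ≫ A ◁ (β_ A A).inv ≫ (α_ A A A).inv)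
    ((wl S.t₂ ≫ (A ◁ S.e₁)) ≫ A ◁ (β_ A A).inv ≫ (α_ A A A).inv) (by
      rw [key, key]
      congr 1
      have haux := S.e₁_t₂_aux
      calc _ = _ := by simp only [wl]; monoidal
        _ = _ := haux
        _ = _ := by simp only [wl]; monoidal)
  exact (cancel_mono _).1 h

theorem piL1_t₂ : wl S.t₂ ≫ (A ◁ S.piL1) = (A ◁ S.e₁) ≫ ml S.m := by
  have h := S.e₁_t₂
  calc _ = (wl S.t₂ ≫ A ◁ S.e₁) ≫ A ◁ ((S.j ▷ A) ≫ (λ_ A).hom) := by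
        simp [piL1]
    _ = _ := by
      rw [← h]
      simp only [wl, ml]
      rw [S.hm₂]
      monoidal

theorem t₄_piL1 : ((β_ A A).hom ≫ S.t₄) ▷ A ≫ (α_ A A A).hom ≫ (A ◁ S.piL1) = (S.m ▷ A) ≫ S.e₁ := by
  have h24 : (A ◁ S.t₄) ≫ ml S.m =
      wl (β_ A A).inv ≫ (A ◁ S.t₂) ≫ wl (β_ A A).hom ≫ ml S.m := by
    rw [S.hc24]
    simp [wl, ← comp_whiskerRight_assoc]
  have h2 := S.piL1_t₂
  have hb := S.m_braid
  have hs := slide S.e₁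
  have he := S.e₁_m_left
  simp only [wl, ml, assoc] at h24 h2 hb hs he
  apply S.ndl _ A S.memA
  dsimp only
  calc _ = 𝟙 (A ⊗ ((A ⊗ A) ⊗ A)) ⊗≫ A ◁ (β_ A A).hom ▷ A ⊗≫ A ◁ S.t₄ ▷ A ⊗≫
        ((A ⊗ A) ◁ S.piL1 ≫ S.m ▷ A) := by monoidal
    _ = 𝟙 (A ⊗ ((A ⊗ A) ⊗ A)) ⊗≫ A ◁ (β_ A A).hom ▷ A ⊗≫
        ((A ◁ S.t₄) ≫ (α_ A A A).inv ≫ S.m ▷ A) ▷ A ⊗≫ A ◁ S.piL1 := by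
      rw [whisker_exchange]; monoidal
    _ = 𝟙 (A ⊗ ((A ⊗ A) ⊗ A)) ⊗≫ A ◁ (β_ A A).hom ▷ A ⊗≫ (β_ A A).inv ▷ (A ⊗ A) ⊗≫
        A ◁ S.t₂ ▷ A ⊗≫ (((β_ A A).hom ≫ S.m) ▷ (A ⊗ A) ≫ A ◁ S.piL1) := by
      rw [h24]; monoidal
    _ = 𝟙 (A ⊗ ((A ⊗ A) ⊗ A)) ⊗≫ A ◁ (β_ A A).hom ▷ A ⊗≫ (β_ A A).inv ▷ (A ⊗ A) ⊗≫
        A ◁ ((α_ A A A).inv ≫ S.t₂ ▷ A ≫ (α_ A A A).hom ≫ A ◁ S.piL1) ⊗≫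
        ((β_ A A).hom ≫ S.m) ▷ A := by
      rw [← whisker_exchange]; monoidal
    _ = 𝟙 (A ⊗ ((A ⊗ A) ⊗ A)) ⊗≫ A ◁ (β_ A A).hom ▷ A ⊗≫
        ((β_ A A).inv ▷ (A ⊗ A) ≫ (A ⊗ A) ◁ S.e₁) ⊗≫
        (A ◁ S.m ≫ (β_ A A).hom ≫ S.m) ▷ A := by
      rw [h2]; monoidal
    _ = 𝟙 (A ⊗ ((A ⊗ A) ⊗ A)) ⊗≫ A ◁ (β_ A A).hom ▷ A ⊗≫ (A ⊗ A) ◁ S.e₁ ⊗≫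
        ((β_ A A).inv ≫ (β_ A A).hom) ▷ (A ⊗ A) ⊗≫
        (A ◁ ((β_ A A).hom ≫ S.m) ≫ S.m) ▷ A := by
      rw [← whisker_exchange, hb]; monoidal
    _ = 𝟙 (A ⊗ ((A ⊗ A) ⊗ A)) ⊗≫ A ◁ ((α_ A A A).inv ≫ (β_ A A).hom ▷ A ≫ (α_ A A A).hom ≫ A ◁ S.e₁ ≫
        (α_ A A A).inv ≫ (β_ A A).inv ▷ A ≫ (α_ A A A).hom) ⊗≫ A ◁ S.m ▷ A ⊗≫ S.m ▷ A := by
      rw [S.m_double, Iso.inv_hom_id]; monoidal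
    _ = _ := by
      rw [he, ← hs]; monoidal

theorem t₁_m : A ◁ S.m ≫ S.t₁ = (α_ A A A).inv ≫ S.t₁ ▷ A ≫ (α_ A A A).hom ≫ A ◁ S.m := by
  have h12 := S.hc12
  have ha := S.m_assoc
  simp only [wl, ml, assoc] at h12
  apply S.ndl _ A S.memA
  dsimp only
  calc _ = A ◁ A ◁ S.m ≫ (A ◁ S.t₁ ≫ (α_ A A A).inv ≫ S.m ▷ A) := by monoidal
    _ = 𝟙 (A ⊗ (A ⊗ (A ⊗ A))) ⊗≫ ((A ⊗ A) ◁ S.m ≫ S.t₂ ▷ A) ⊗≫ A ◁ S.m := by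
      rw [h12]; monoidal
    _ = 𝟙 (A ⊗ (A ⊗ (A ⊗ A))) ⊗≫ S.t₂ ▷ (A ⊗ A) ⊗≫ A ◁ (A ◁ S.m ≫ S.m) := by
      rw [whisker_exchange]; monoidal
    _ = 𝟙 (A ⊗ (A ⊗ (A ⊗ A))) ⊗≫ ((α_ A A A).inv ≫ S.t₂ ▷ A ≫ (α_ A A A).hom ≫ A ◁ S.m) ▷ A ⊗≫
        A ◁ S.m := by
      rw [ha]; monoidal
    _ = 𝟙 (A ⊗ (A ⊗ (A ⊗ A))) ⊗≫ A ◁ S.t₁ ▷ A ⊗≫ (S.m ▷ (A ⊗ A) ≫ A ◁ S.m) := by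
      rw [← h12]; monoidal
    _ = _ := by
      rw [← whisker_exchange]; monoidal

theorem piL1_m : A ◁ S.m ≫ S.piL1 = (α_ A A A).inv ≫ S.piL1 ▷ A ≫ S.m := by
  have hP : A ◁ S.piL1 ≫ S.m = wl (β_ A A).hom ≫ A ◁ S.t₁ ≫ (α_ A A A).inv ≫
      ((β_ A A).inv ≫ S.m ≫ S.j) ▷ A ≫ (λ_ A).hom := by
    have h8 := congrArg (fun f => (A ◁ (β_ A A).inv) ≫ f) S.ax8
    calc _ = (A ◁ (β_ A A).inv) ≫ (A ◁ (β_ A A).hom) ≫ (A ◁ S.e₁) ≫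
          (A ◁ ((S.j ▷ A) ≫ (λ_ A).hom)) ≫ S.m := by simp [piL1]
      _ = _ := h8.symm
      _ = ((A ◁ (β_ A A).inv) ≫ wl S.t₁ ≫ (A ◁ (β_ A A).hom)) ≫ ml S.m ≫ (S.j ▷ A) ≫ (λ_ A).hom := by
        simp only [assoc]
      _ = _ := by
        rw [slide]
        simp only [wl, ml]
        monoidal
  have h := S.ndl _ (𝟙_ C) S.memI (a₁ := (A ◁ S.m ≫ S.piL1) ≫ (ρ_ A).inv)
    (a₂ := ((α_ A A A).inv ≫ S.piL1 ▷ A ≫ S.m) ≫ (ρ_ A).inv) (by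
      dsimp only
      have ha := S.m_assoc
      have ht := S.t₁_m
      simp only [wl] at hP
      calc _ = (A ◁ A ◁ S.m ≫ A ◁ S.piL1 ≫ S.m) ≫ (ρ_ A).inv := by monoidal
        _ = 𝟙 (A ⊗ (A ⊗ (A ⊗ A))) ⊗≫ ((A ⊗ A) ◁ S.m ≫ (β_ A A).hom ▷ A) ⊗≫
            A ◁ S.t₁ ⊗≫ ((β_ A A).inv ≫ S.m ≫ S.j) ▷ A ⊗≫ 𝟙 (A ⊗ 𝟙_ C) := by
          rw [hP]; monoidal
        _ = 𝟙 (A ⊗ (A ⊗ (A ⊗ A))) ⊗≫ (β_ A A).hom ▷ (A ⊗ A) ⊗≫ A ◁ (A ◁ S.m ≫ S.t₁) ⊗≫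
            ((β_ A A).inv ≫ S.m ≫ S.j) ▷ A ⊗≫ 𝟙 (A ⊗ 𝟙_ C) := by
          rw [whisker_exchange]; monoidal
        _ = 𝟙 (A ⊗ (A ⊗ (A ⊗ A))) ⊗≫ (β_ A A).hom ▷ (A ⊗ A) ⊗≫ A ◁ S.t₁ ▷ A ⊗≫
            ((A ⊗ A) ◁ S.m ≫ ((β_ A A).inv ≫ S.m ≫ S.j) ▷ A) ⊗≫ 𝟙 (A ⊗ 𝟙_ C) := by
          rw [ht]; monoidal
        _ = 𝟙 (A ⊗ (A ⊗ (A ⊗ A))) ⊗≫ (((α_ A A A).inv ≫ (β_ A A).hom ▷ A ≫ (α_ A A A).hom) ≫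
            A ◁ S.t₁ ≫ (α_ A A A).inv ≫
            ((β_ A A).inv ≫ S.m ≫ S.j) ▷ A ≫ (λ_ A).hom) ▷ A ⊗≫ S.m ⊗≫ 𝟙 (A ⊗ 𝟙_ C) := by
          rw [whisker_exchange]; monoidal
        _ = 𝟙 (A ⊗ (A ⊗ (A ⊗ A))) ⊗≫ A ◁ S.piL1 ▷ A ⊗≫ ((α_ A A A).inv ≫ S.m ▷ A ≫ S.m) ⊗≫
            𝟙 (A ⊗ 𝟙_ C) := by
          rw [← hP]; monoidal
        _ = _ := by
          rw [← ha]; monoidal)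
  exact (cancel_mono _).1 h

theorem piL1_counit : A ◁ S.t₁ ≫ (α_ A A A).inv ≫ (S.piL1 ≫ S.j) ▷ A ≫ (λ_ A).hom
    = A ◁ S.m ≫ S.piL1 := by
  have h := congrArg (fun f => f ≫ (S.j ▷ (A ⊗ A)) ≫ (λ_ (A ⊗ A)).hom ≫ (S.j ▷ A) ≫ (λ_ A).hom) S.ax5
  rw [S.piL1_m]
  calc _ = _ := ?_
    _ = _ := h
    _ = _ := ?_
  · simp only [wl, piL1]
    monoidal
  · rw [assoc, whisker_exchange_assoc, S.hm₁]
    simp only [wl, piL1]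
    monoidal

end RWMB

theorem actPair_assoc {A : C} {m : A ⊗ A ⟶ A} {V W : C} (v : A ⊗ V ⟶ V) (w : A ⊗ W ⟶ W)
    (hv : (A ◁ v) ≫ v = (α_ A A V).inv ≫ (m ▷ V) ≫ v)
    (hw : (A ◁ w) ≫ w = (α_ A A W).inv ≫ (m ▷ W) ≫ w) :
    (A ⊗ A) ◁ actPair v w ≫ actPair v w =
      (α_ (A ⊗ A) (A ⊗ A) (V ⊗ W)).inv ≫
        (midSw A ≫ (m ▷ (A ⊗ A)) ≫ (A ◁ m)) ▷ (V ⊗ W) ≫ actPair v w := by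
  have hb : A ◁ v ≫ (β_ A V).hom = (α_ A A V).inv ≫ (β_ A A).hom ▷ V ≫ (α_ A A V).hom ≫
      A ◁ (β_ A V).hom ≫ (α_ A V A).inv ≫ v ▷ A := by
    rw [BraidedCategory.braiding_naturality_right, BraidedCategory.braiding_tensor_right_hom]
    simp
  have hm := braid_left m V
  simp only [actPair, midSw]
  calc _ = 𝟙 ((A ⊗ A) ⊗ ((A ⊗ A) ⊗ (V ⊗ W))) ⊗≫ A ◁ A ◁ A ◁ (β_ A V).hom ▷ W ⊗≫ A ◁ A ◁ v ▷ (A ⊗ W) ⊗≫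
          A ◁ ((A ⊗ V) ◁ w ≫ (β_ A V).hom ▷ W) ⊗≫ v ▷ (A ⊗ W) ⊗≫ V ◁ w := by monoidal
    _ = 𝟙 ((A ⊗ A) ⊗ ((A ⊗ A) ⊗ (V ⊗ W))) ⊗≫ A ◁ A ◁ A ◁ (β_ A V).hom ▷ W ⊗≫ A ◁ (A ◁ v ≫ (β_ A V).hom) ▷ (A ⊗ W) ⊗≫
          ((A ⊗ V) ◁ A ◁ w ≫ v ▷ (A ⊗ W)) ⊗≫ V ◁ w := by
        rw [whisker_exchange]; monoidal
    _ = 𝟙 ((A ⊗ A) ⊗ ((A ⊗ A) ⊗ (V ⊗ W))) ⊗≫ A ◁ A ◁ A ◁ (β_ A V).hom ▷ W ⊗≫ A ◁ (A ◁ v ≫ (β_ A V).hom) ▷ (A ⊗ W) ⊗≫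
          v ▷ (A ⊗ (A ⊗ W)) ⊗≫ V ◁ (A ◁ w ≫ w) := by
        rw [whisker_exchange]; monoidal
    _ = 𝟙 ((A ⊗ A) ⊗ ((A ⊗ A) ⊗ (V ⊗ W))) ⊗≫ A ◁ A ◁ A ◁ (β_ A V).hom ▷ W ⊗≫ A ◁ (β_ A A).hom ▷ (V ⊗ (A ⊗ W)) ⊗≫
          A ◁ A ◁ (β_ A V).hom ▷ (A ⊗ W) ⊗≫ (A ◁ v ≫ v) ▷ (A ⊗ (A ⊗ W)) ⊗≫ V ◁ m ▷ W ⊗≫ V ◁ w := by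
        rw [hw, hb]; monoidal
    _ = 𝟙 ((A ⊗ A) ⊗ ((A ⊗ A) ⊗ (V ⊗ W))) ⊗≫ A ◁ ((A ⊗ A) ◁ (β_ A V).hom ▷ W ≫ (β_ A A).hom ▷ ((V ⊗ A) ⊗ W)) ⊗≫
          A ◁ A ◁ (β_ A V).hom ▷ (A ⊗ W) ⊗≫ m ▷ (V ⊗ (A ⊗ (A ⊗ W))) ⊗≫
          (v ▷ ((A ⊗ A) ⊗ W) ≫ V ◁ m ▷ W) ⊗≫ V ◁ w := by
        rw [hv]; monoidal
    _ = 𝟙 ((A ⊗ A) ⊗ ((A ⊗ A) ⊗ (V ⊗ W))) ⊗≫ A ◁ (β_ A A).hom ▷ (A ⊗ (V ⊗ W)) ⊗≫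
          ((A ⊗ A) ◁ (𝟙 (A ⊗ (A ⊗ (V ⊗ W))) ⊗≫ A ◁ (β_ A V).hom ▷ W ⊗≫ (β_ A V).hom ▷ (A ⊗ W) ⊗≫
            𝟙 (V ⊗ (A ⊗ (A ⊗ W)))) ≫ m ▷ (V ⊗ (A ⊗ (A ⊗ W)))) ⊗≫
          A ◁ V ◁ m ▷ W ⊗≫ v ▷ (A ⊗ W) ⊗≫ V ◁ w := by
        rw [whisker_exchange, ← whisker_exchange v]; monoidal
    _ = 𝟙 ((A ⊗ A) ⊗ ((A ⊗ A) ⊗ (V ⊗ W))) ⊗≫ A ◁ (β_ A A).hom ▷ (A ⊗ (V ⊗ W)) ⊗≫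
          m ▷ (A ⊗ (A ⊗ (V ⊗ W))) ⊗≫ A ◁ (m ▷ V ≫ (β_ A V).hom) ▷ W ⊗≫
          v ▷ (A ⊗ W) ⊗≫ V ◁ w := by
        rw [whisker_exchange, hm]; monoidal
    _ = _ := by monoidal

theorem part_one {A L V W : C} (e : A ⊗ A ⟶ A ⊗ A) (n₁ : L ⊗ A ⟶ A) (μ : L ⊗ L ⟶ L) (ε : L ⟶ 𝟙_ C)
    (τ : A ⟶ L ⊗ A) (τbar : A ⟶ A ⊗ L) (v : A ⊗ V ⟶ V) (w : A ⊗ W ⟶ W)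
    (h1 : L ◁ τ ≫ (α_ L L A).inv ≫ (μ ≫ ε) ▷ A ≫ (λ_ A).hom = n₁)
    (h2 : τbar ▷ A ≫ (α_ A L A).hom ≫ A ◁ n₁ = e)
    (τbM : V ⟶ V ⊗ L)
    (hτbM : v ≫ τbM = (τbar ▷ V) ≫ (α_ A L V).hom ≫ (A ◁ (β_ L V).hom) ≫
      (α_ A V L).inv ≫ (v ▷ L))
    (τN : W ⟶ L ⊗ W)
    (hτN : w ≫ τN = (τ ▷ W) ≫ (α_ L A W).hom ≫ (L ◁ w)) :
    actPair v w ≫ sIdem μ ε τbM τN = (e ▷ (V ⊗ W)) ≫ actPair v w := by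
  have hm := braid_left n₁ V
  simp only [actPair, sIdem]
  calc _ = 𝟙 ((A ⊗ A) ⊗ (V ⊗ W)) ⊗≫ A ◁ (β_ A V).hom ▷ W ⊗≫ v ▷ (A ⊗ W) ⊗≫ (V ◁ w ≫ τbM ▷ W) ⊗≫
          (V ⊗ L) ◁ τN ⊗≫ V ◁ (μ ≫ ε) ▷ W ⊗≫ 𝟙 (V ⊗ W) := by monoidal
    _ = 𝟙 ((A ⊗ A) ⊗ (V ⊗ W)) ⊗≫ A ◁ (β_ A V).hom ▷ W ⊗≫ (v ≫ τbM) ▷ (A ⊗ W) ⊗≫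
          (V ⊗ L) ◁ (w ≫ τN) ⊗≫ V ◁ (μ ≫ ε) ▷ W ⊗≫ 𝟙 (V ⊗ W) := by
        rw [whisker_exchange]; monoidal
    _ = 𝟙 ((A ⊗ A) ⊗ (V ⊗ W)) ⊗≫ A ◁ (β_ A V).hom ▷ W ⊗≫ τbar ▷ ((V ⊗ A) ⊗ W) ⊗≫
          A ◁ (β_ L V).hom ▷ (A ⊗ W) ⊗≫ v ▷ (L ⊗ (A ⊗ W)) ⊗≫
          V ◁ L ◁ τ ▷ W ⊗≫ V ◁ ((L ⊗ L) ◁ w ≫ (μ ≫ ε) ▷ W) ⊗≫ 𝟙 (V ⊗ W) := by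
        rw [hτbM, hτN]; monoidal
    _ = 𝟙 ((A ⊗ A) ⊗ (V ⊗ W)) ⊗≫ A ◁ (β_ A V).hom ▷ W ⊗≫ τbar ▷ ((V ⊗ A) ⊗ W) ⊗≫
          A ◁ (β_ L V).hom ▷ (A ⊗ W) ⊗≫ v ▷ (L ⊗ (A ⊗ W)) ⊗≫
          V ◁ (L ◁ τ ≫ (α_ L L A).inv ≫ (μ ≫ ε) ▷ A ≫ (λ_ A).hom) ▷ W ⊗≫ V ◁ w := by
        rw [whisker_exchange]; monoidal
    _ = 𝟙 ((A ⊗ A) ⊗ (V ⊗ W)) ⊗≫ (A ◁ (β_ A V).hom ▷ W ≫ τbar ▷ ((V ⊗ A) ⊗ W)) ⊗≫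
          A ◁ (β_ L V).hom ▷ (A ⊗ W) ⊗≫ (v ▷ ((L ⊗ A) ⊗ W) ≫
          V ◁ n₁ ▷ W) ⊗≫ V ◁ w := by
        rw [h1]; monoidal
    _ = 𝟙 ((A ⊗ A) ⊗ (V ⊗ W)) ⊗≫ τbar ▷ ((A ⊗ V) ⊗ W) ⊗≫ A ◁ (n₁ ▷ V ≫ (β_ A V).hom) ▷ W ⊗≫
          v ▷ (A ⊗ W) ⊗≫ V ◁ w := by
        rw [whisker_exchange, ← whisker_exchange v, hm]; monoidal
    _ = _ := by
        rw [← h2]; monoidal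

/-- Lemma 4.5: for `A`-modules `(V, v)` and `(W, w)`, the canonical
idempotent `s` on `V ⊗ W` interacts with `e₁` and `e₂` as stated. -/
theorem lemma_idempotent_e₁_e₂
    [HasCoequalizers C]
    (presL : ∀ X : C, PreservesColimitsOfShape WalkingParallelPair (tensorLeft X))
    (presR : ∀ X : C, PreservesColimitsOfShape WalkingParallelPair (tensorRight X))
    (regcomp : ∀ {X Y Z : C} (f : X ⟶ Y) (g : Y ⟶ Z),
      Nonempty (RegularEpi f) → Nonempty (RegularEpi g) → Nonempty (RegularEpi (f ≫ g)))
    {A : C} {𝒴 : Set C} (S : RWMB A 𝒴)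
    (hmreg : Nonempty (RegularEpi S.m))
    (hclosed : ∀ Y Y' : C, Y ∈ 𝒴 → Y' ∈ 𝒴 → (Y ⊗ Y') ∈ 𝒴)
    (L : C) (p : A ⟶ L)
    (hpc : S.piL1 ≫ p = S.piBarR1c ≫ p)
    (hpu : ∀ {X : C} (h : A ⟶ X), S.piL1 ≫ h = S.piBarR1c ≫ h →
      ∃! k : L ⟶ X, p ≫ k = h)
    (memL : L ∈ 𝒴)
    (n₁ : L ⊗ A ⟶ A) (hn₁ : (p ▷ A) ≫ n₁ = S.piL1)
    (hndn₁ : NdRightOn n₁ 𝒴)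
    (n₂ : A ⊗ L ⟶ A) (hn₂ : (A ◁ p) ≫ n₂ = S.piL2)
    (μ : L ⊗ L ⟶ L) (hμ : (L ◁ p) ≫ μ = n₁ ≫ p)
    (δ : L ⟶ L ⊗ L) (hδ : S.m ≫ p ≫ δ = S.t₁ ≫ (p ▷ A) ≫ (L ◁ p))
    (ε : L ⟶ 𝟙_ C) (hε : p ≫ ε = S.j)
    (hμδ : δ ≫ μ = 𝟙 L)
    (τ : A ⟶ L ⊗ A) (hτ : S.m ≫ τ = S.t₁ ≫ (p ▷ A))
    (τbar : A ⟶ A ⊗ L) (hτbar : S.m ≫ τbar = (β_ A A).hom ≫ S.t₄ ≫ (A ◁ p))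
    -- two `A`-modules, with the right coaction on `V` and the left coaction on `W`
    (M N : AModule A S.m 𝒴)
    (τbM : M.V ⟶ M.V ⊗ L)
    (hτbM : M.act ≫ τbM = (τbar ▷ M.V) ≫ (α_ A L M.V).hom ≫ (A ◁ (β_ L M.V).hom) ≫
      (α_ A M.V L).inv ≫ (M.act ▷ L))
    (τN : N.V ⟶ L ⊗ N.V)
    (hτN : N.act ≫ τN = (τ ▷ N.V) ≫ (α_ L A N.V).hom ≫ (L ◁ N.act)) :
    -- (i)  `s ∘ (v ⊗ w) ∘ (1 ⊗ c ⊗ 1) = (v ⊗ w) ∘ (1 ⊗ c ⊗ 1) ∘ (e₁ ⊗ 1 ⊗ 1)`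
    (actPair M.act N.act ≫ sIdem μ ε τbM τN
      = (S.e₁ ▷ (M.V ⊗ N.V)) ≫ actPair M.act N.act) ∧
    -- (ii) `(v ⊗ w) ∘ (1 ⊗ c ⊗ 1) ∘ (1 ⊗ 1 ⊗ s) = (v ⊗ w) ∘ (1 ⊗ c ⊗ 1) ∘ (e₂ ⊗ 1 ⊗ 1)`
    (((A ⊗ A) ◁ sIdem μ ε τbM τN) ≫ actPair M.act N.act
      = (S.e₂ ▷ (M.V ⊗ N.V)) ≫ actPair M.act N.act) := by
  have hp := regepi_of_univ S.piL1 S.piBarR1c p hpc hpu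
  have h1 : L ◁ τ ≫ (α_ L L A).inv ≫ (μ ≫ ε) ▷ A ≫ (λ_ A).hom = n₁ := by
    have i1 := epi_of_regepi _ (regepi_wl presL L _ hmreg)
    have i2 := epi_of_regepi _ (regepi_wr presR (A ⊗ A) _ hp)
    rw [← cancel_epi (L ◁ S.m), ← cancel_epi (p ▷ (A ⊗ A))]
    have hpp : p ▷ A ≫ L ◁ p ≫ μ ≫ ε = S.piL1 ≫ S.j := by
      rw [reassoc_of% hμ, reassoc_of% hn₁, hε]
    calc _ = p ▷ (A ⊗ A) ≫ L ◁ (S.m ≫ τ) ≫ (α_ L L A).inv ≫ (μ ≫ ε) ▷ A ≫ (λ_ A).hom := by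
          monoidal
      _ = (p ▷ (A ⊗ A) ≫ L ◁ S.t₁) ≫ L ◁ p ▷ A ≫ (α_ L L A).inv ≫ (μ ≫ ε) ▷ A ≫ (λ_ A).hom := by
          rw [hτ]; monoidal
      _ = A ◁ S.t₁ ≫ (α_ A A A).inv ≫ (p ▷ A ≫ L ◁ p ≫ μ ≫ ε) ▷ A ≫ (λ_ A).hom := by
          rw [← whisker_exchange]; monoidal
      _ = A ◁ S.m ≫ p ▷ A ≫ n₁ := by
          rw [hpp, S.piL1_counit, hn₁]
      _ = _ := by
          rw [whisker_exchange_assoc]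
  have h2 : τbar ▷ A ≫ (α_ A L A).hom ≫ A ◁ n₁ = S.e₁ := by
    have i1 := epi_of_regepi _ (regepi_wr presR A _ hmreg)
    rw [← cancel_epi (S.m ▷ A), ← S.t₄_piL1, ← hn₁]
    calc _ = (S.m ≫ τbar) ▷ A ≫ (α_ A L A).hom ≫ A ◁ n₁ := by monoidal
      _ = _ := by
        rw [hτbar]; monoidal
  have hi := part_one S.e₁ n₁ μ ε τ τbar M.act N.act h1 h2 τbM hτbM τN hτN
  refine ⟨hi, ?_⟩
  have hA := actPair_assoc M.act N.act M.assoc N.assoc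
  have i : Epi ((A ⊗ A) ◁ actPair M.act N.act) := by
    have i1 := epi_of_regepi _ (regepi_wl presL (A ⊗ A) _ (regepi_wr presR (A ⊗ N.V) _ M.regEpi))
    have i2 := epi_of_regepi _ (regepi_wl presL (A ⊗ A) _ (regepi_wl presL M.V _ N.regEpi))
    simp only [actPair, whiskerLeft_comp]
    infer_instance
  rw [← cancel_epi ((A ⊗ A) ◁ actPair M.act N.act), ← whiskerLeft_comp_assoc, hi,
    whiskerLeft_comp_assoc, hA, whisker_exchange_assoc, hA]
  have hc := S.hecomp
  calc _ = (α_ (A ⊗ A) (A ⊗ A) (M.V ⊗ N.V)).inv ≫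
        (((A ⊗ A) ◁ S.e₁) ≫ midSw A ≫ (S.m ▷ (A ⊗ A)) ≫ (A ◁ S.m)) ▷ (M.V ⊗ N.V) ≫
          actPair M.act N.act := by monoidal
    _ = _ := by
      rw [hc]; monoidal

end WeakMultiplierBimonoid
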